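/- Pyramidal growth in the plane: for any two convex polygons P ⊆ Q in ℝ², there exists a finite chain P = P₀ ⊂_Δ P₁ ⊂_Δ … ⊂_Δ P_n = Q of pyramidal extensions (each step stacks a triangle onto an edge or takes a pyramid over a segment). -/

import Mathlib

open Set

noncomputable section

/-- A polytope: the convex hull of a finite set of points. -/
def IsPolytope {E : Type*} [AddCommGroup E] [Module ℝ E] (P : Set E) : Prop :=
  ∃ s : Finset E, P = convexHull ℝ (s : Set E)

/-- The dimension of a set: the dimension of its affine hull. -/
def polyDim {E : Type*} [AddCommGroup E] [Module ℝ E] (P : Set E) : ℕ :=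
  Module.finrank ℝ (affineSpan ℝ P).direction

/-- A facet: an exposed face of dimension one less. -/
def IsFacet {E : Type*} [NormedAddCommGroup E] [NormedSpace ℝ E] (F P : Set E) : Prop :=
  IsExposed ℝ P F ∧ polyDim F + 1 = polyDim P

/-- `Δ` is a pyramid with base the polytope `B` and apex `v`. -/
def IsPyramidOver {E : Type*} [AddCommGroup E] [Module ℝ E]
    (Δ B : Set E) (v : E) : Prop :=
  IsPolytope B ∧ v ∉ affineSpan ℝ B ∧ Δ = convexHull ℝ (B ∪ {v})

/-- Pyramidal extension: `closure (Q \ P)` is a pyramid whose intersection with `P`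
is a facet of it. -/
def PyramidalExt {E : Type*} [NormedAddCommGroup E] [NormedSpace ℝ E]
    (P Q : Set E) : Prop :=
  IsPolytope P ∧ IsPolytope Q ∧ P ⊆ Q ∧
    (∃ B v, IsPyramidOver (closure (Q \ P)) B v) ∧
    IsFacet (closure (Q \ P) ∩ P) (closure (Q \ P))

end

theorem polyDim_pyramid {E : Type*} [NormedAddCommGroup E] [NormedSpace ℝ E]
    [FiniteDimensional ℝ E] (B : Set E) (u : E) (hB : B.Nonempty) (hu : u ∉ affineSpan ℝ B) :
    polyDim B + 1 = polyDim (convexHull ℝ (B ∪ {u})) := by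
  obtain ⟨b, hb⟩ := hB
  have hb' : b ∈ affineSpan ℝ B := subset_affineSpan ℝ B hb
  unfold polyDim
  rw [affineSpan_convexHull, Set.union_singleton, ← affineSpan_insert_affineSpan,
    AffineSubspace.direction_affineSpan_insert hb', sup_comm, Submodule.finrank_sup_span_singleton]
  intro h
  exact hu ((AffineSubspace.vsub_right_mem_direction_iff_mem hb' u).1 h)

theorem notMem_affineSpan {E : Type*} [NormedAddCommGroup E] [NormedSpace ℝ E]
    (B : Set E) (u : E) (g : E →L[ℝ] ℝ) (c : ℝ) (hB : B.Nonempty) (hg : ∀ b ∈ B, g b = c)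
    (hu : g u ≠ c) : u ∉ affineSpan ℝ B := by
  intro h
  obtain ⟨b, hb⟩ := hB
  have h1 : u -ᵥ b ∈ vectorSpan ℝ B := by
    rw [← direction_affineSpan]
    exact AffineSubspace.vsub_mem_direction h (subset_affineSpan ℝ B hb)
  have h2 : vectorSpan ℝ B ≤ LinearMap.ker (g : E →ₗ[ℝ] ℝ) := by
    rw [vectorSpan_def, Submodule.span_le]
    rintro _ ⟨x, hx, y, hy, rfl⟩
    simp [hg x hx, hg y hy]
  have h3 := h2 h1
  simp [hg b hb, sub_eq_zero] at h3
  exact hu h3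

theorem stack {E : Type*} [NormedAddCommGroup E] [NormedSpace ℝ E]
    [FiniteDimensional ℝ E] (t b : Finset E) (u : E) (g : E →L[ℝ] ℝ) (c : ℝ)
    (hbne : b.Nonempty) (hbt : b ⊆ t) (hb : ∀ p ∈ b, g p = c) (ht : ∀ p ∈ t, g p ≤ c)
    (hu : c < g u)
    (hm : ∀ m ∈ convexHull ℝ (insert u (t : Set E)), g m = c → m ∈ convexHull ℝ (b : Set E)) :
    PyramidalExt (convexHull ℝ (t : Set E)) (convexHull ℝ (insert u (t : Set E))) := by
  classical
  set P := convexHull ℝ (t : Set E) with hP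
  set Q := convexHull ℝ (insert u (t : Set E)) with hQ
  set B := convexHull ℝ (b : Set E) with hB
  set D := convexHull ℝ (B ∪ {u}) with hD
  have hPQ : P ⊆ Q := convexHull_mono (Set.subset_insert _ _)
  have hBP : B ⊆ P := convexHull_mono (by exact_mod_cast hbt)
  have hBne : B.Nonempty := by
    obtain ⟨x, hx⟩ := hbne
    exact ⟨x, subset_convexHull ℝ _ (by exact_mod_cast hx)⟩
  have htne : (t : Set E).Nonempty := by
    obtain ⟨x, hx⟩ := hbne
    exact ⟨x, by exact_mod_cast hbt hx⟩
  have hgP : ∀ p ∈ P, g p ≤ c := fun p hp =>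
    convexHull_min (t := {p | g p ≤ c}) (fun x hx => ht x (by exact_mod_cast hx))
      (convex_halfSpace_le g.toLinearMap.isLinear c) hp
  have hgB : ∀ p ∈ B, g p = c := fun p hp =>
    convexHull_min (t := {p | g p = c}) (fun x hx => hb x (by exact_mod_cast hx))
      (convex_hyperplane g.toLinearMap.isLinear c) hp
  have huQ : u ∈ Q := subset_convexHull ℝ _ (Set.mem_insert _ _)
  have hQc : Convex ℝ Q := convex_convexHull ℝ _
  have hDQ : D ⊆ Q := by
    refine convexHull_min ?_ hQc
    rintro x (hx | hx)
    · exact hPQ (hBP hx)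
    · rw [Set.mem_singleton_iff] at hx; rw [hx]; exact huQ
  have huD : u ∈ D := subset_convexHull ℝ _ (Or.inr rfl)
  have hBD : B ⊆ D := fun x hx => subset_convexHull ℝ _ (Or.inl hx)
  have hDc : Convex ℝ D := convex_convexHull ℝ _
  have hgD : ∀ p ∈ D, c ≤ g p := fun p hp =>
    convexHull_min (t := {p | c ≤ g p})
      (by
        rintro x (hx | hx)
        · exact (hgB x hx).ge
        · rw [Set.mem_singleton_iff] at hx; rw [hx]; exact hu.le)
      (convex_halfSpace_ge g.toLinearMap.isLinear c) hp
  have hPc : Convex ℝ P := convex_convexHull ℝ _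
  -- the two halves of Q
  have key : ∀ z ∈ Q, (z ∈ P) ∨ (z ∈ D ∧ c < g z) := by
    intro z hz
    rw [hQ, convexHull_insert htne, mem_convexJoin] at hz
    obtain ⟨u', hu', p, hp, hz⟩ := hz
    rw [Set.mem_singleton_iff] at hu'
    subst hu'
    obtain ⟨α, β, hα, hβ, hαβ, rfl⟩ := hz
    have hgp := hgP p hp
    -- crossing point
    set d := g u' - g p with hd
    have hdpos : 0 < d := by linarith
    set θ := (c - g p) / d with hθ
    have hθ0 : 0 ≤ θ := div_nonneg (by linarith) hdpos.le
    have hθ1 : θ < 1 := by rw [hθ, div_lt_one hdpos]; linarith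
    have hθd : θ * d = c - g p := by rw [hθ]; field_simp
    set m := θ • u' + (1 - θ) • p with hmdef
    have hgm : g m = c := by
      simp only [hmdef, map_add, map_smul, smul_eq_mul]
      rw [hd] at hθd; linarith
    have hmB : m ∈ B := hm m (hQc huQ (hPQ hp) hθ0 (by linarith) (by ring)) hgm
    rcases le_or_gt α θ with h | h
    · left
      rcases hθ0.eq_or_lt with h0 | h0
      · have : α = 0 := by linarith
        have : β = 1 := by linarith
        subst α; subst β; simpa using hp
      · have : α • u' + β • p = (α / θ) • m + (1 - α / θ) • p := by
          rw [hmdef, show β = 1 - α by linarith]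
          match_scalars
          · field_simp
          · field_simp; ring
        rw [this]
        exact hPc (hBP hmB) hp (by positivity) (by rw [sub_nonneg, div_le_one h0]; exact h) (by ring)
    · right
      constructor
      · have h1 : 0 < 1 - θ := by linarith
        have : α • u' + β • p = ((α - θ) / (1 - θ)) • u' + (β / (1 - θ)) • m := by
          rw [hmdef, show β = 1 - α by linarith]
          match_scalars
          · field_simp; ring
          · field_simp
        rw [this]
        refine hDc huD (hBD hmB) (div_nonneg (by linarith) h1.le) (by positivity) ?_
        field_simp; linarith
      · simp only [map_add, map_smul, smul_eq_mul]
        rw [show β = 1 - α by linarith]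
        have : θ * d < α * d := mul_lt_mul_of_pos_right h hdpos
        rw [hθd, hd] at this
        linarith
  have hDfin : D = convexHull ℝ ((insert u b : Finset E) : Set E) := by
    rw [hD, hB, convexHull_convexHull_union_left, Finset.coe_insert, Set.union_singleton]
  have hDcl : IsClosed D := by
    rw [hDfin]; exact (Finset.finite_toSet _).isClosed_convexHull ℝ
  have hcl : closure (Q \ P) = D := by
    apply Set.Subset.antisymm
    · refine closure_minimal ?_ hDcl
      rintro z ⟨hz, hzP⟩
      rcases key z hz with h | h
      · exact absurd h hzP
      · exact h.1
    · intro z hz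
      have hgz := hgD z hz
      have hlim : Filter.Tendsto (fun ε : ℝ => ε • u + (1 - ε) • z) (nhdsWithin 0 (Set.Ioi 0))
          (nhds z) := by
        have : Continuous (fun ε : ℝ => ε • u + (1 - ε) • z) := by fun_prop
        have h2 := (this.tendsto 0).mono_left (nhdsWithin_le_nhds (s := Set.Ioi (0:ℝ)))
        simpa using h2
      refine mem_closure_of_tendsto hlim ?_
      have : Set.Ioo (0:ℝ) 1 ∈ nhdsWithin (0:ℝ) (Set.Ioi 0) := Ioo_mem_nhdsGT one_pos
      filter_upwards [this] with ε hε
      refine ⟨hQc huQ (hDQ hz) hε.1.le (by linarith [hε.2]) (by ring), fun h => ?_⟩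
      have := hgP _ h
      simp only [map_add, map_smul, smul_eq_mul] at this
      nlinarith [mul_pos hε.1 (sub_pos.2 hu), mul_nonneg (sub_nonneg.2 hε.2.le) (sub_nonneg.2 hgz)]
  have hint : D ∩ P = B := by
    apply Set.Subset.antisymm
    · rintro z ⟨hz, hzP⟩
      exact hm z (hPQ hzP) (le_antisymm (hgP z hzP) (hgD z hz))
    · exact fun z hz => ⟨hBD hz, hBP hz⟩
  have hna : u ∉ affineSpan ℝ B := notMem_affineSpan B u g c hBne hgB hu.ne'
  refine ⟨⟨t, rfl⟩, ⟨insert u t, by rw [Finset.coe_insert]⟩, hPQ, ?_, ?_⟩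
  · exact ⟨B, u, ⟨b, rfl⟩, hna, hcl⟩
  · rw [hcl, hint]
    refine ⟨fun _ => ⟨-g, ?_⟩, polyDim_pyramid B u hBne hna⟩
    ext z
    constructor
    · intro hz
      refine ⟨hBD hz, fun y hy => ?_⟩
      simp [hgB z hz, hgD y hy]
    · rintro ⟨hz, h⟩
      obtain ⟨x, hx⟩ := hBne
      have := h x (hBD hx)
      simp [hgB x hx] at this
      exact hm z (hDQ hz) (le_antisymm this (hgD z hz))

theorem hull_le {E : Type*} [NormedAddCommGroup E] [NormedSpace ℝ E] {s : Set E}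
    (g : E →L[ℝ] ℝ) (c : ℝ) (h : ∀ p ∈ s, g p ≤ c) : ∀ p ∈ convexHull ℝ s, g p ≤ c := fun _ hp =>
    convexHull_min (t := {p | g p ≤ c}) (fun x hx => h x hx)
      (convex_halfSpace_le g.toLinearMap.isLinear c) hp

theorem core {E : Type*} [NormedAddCommGroup E] [NormedSpace ℝ E] [FiniteDimensional ℝ E]
    (f h : E →L[ℝ] ℝ) (hinj : ∀ a b : E, f a = f b → h a = h b → a = b) (v : E) (n : ℕ) :
    ∀ t : Finset E, (t.filter (fun p => f p ≠ f v)).card = n → (∀ p ∈ t, f v ≤ f p) →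
      (∀ p ∈ t, h p < h v) → (∃ p ∈ t, f p = f v) →
      Relation.ReflTransGen PyramidalExt (convexHull ℝ (t : Set E))
        (convexHull ℝ (insert v (t : Set E))) := by
  classical
  induction n using Nat.strong_induction_on with
  | _ n ih =>
  intro t hcard hf hh hex
  obtain ⟨w, hw, hwmax⟩ := (t.filter (fun p => f p = f v)).exists_max_image h
    (by obtain ⟨p, hp, hp'⟩ := hex; exact ⟨p, by simp [hp, hp']⟩)
  rw [Finset.mem_filter] at hw
  obtain ⟨hwt, hwf⟩ := hw
  have hwmax' : ∀ p ∈ t, f p = f v → h p ≤ h w := fun p hp hp' =>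
    hwmax p (by simp [hp, hp'])
  have hd := hh w hwt
  by_cases hne : (t.filter (fun p => f p ≠ f v)).Nonempty
  swap
  · rw [Finset.not_nonempty_iff_eq_empty, Finset.filter_eq_empty_iff] at hne
    push Not at hne
    refine Relation.ReflTransGen.single (stack t {w} v h (h w) (by simp) (by simpa using hwt)
      (by simp) (fun p hp => hwmax' p hp (hne hp)) hd ?_)
    intro m hm hmh
    have h1 := hull_le f (f v) (by
      rintro p (rfl | hp)
      · exact le_rfl
      · exact (hne (by exact_mod_cast hp)).le) m hm
    have h2 := hull_le (-f) (-f v) (by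
      rintro p (rfl | hp)
      · exact le_rfl
      · simpa using hf p (by exact_mod_cast hp)) m hm
    have h3 : f m = f w := by
      rw [hwf]; simp at h2; linarith
    simp [hinj m w h3 hmh]
  -- slopes
  obtain ⟨w', hw', hsmax⟩ := (t.filter (fun p => f p ≠ f v)).exists_max_image
    (fun p => (h p - h w) / (f p - f v)) hne
  set s := (h w' - h w) / (f w' - f v) with hs
  have hpos : ∀ p ∈ t, f p ≠ f v → 0 < f p - f v := fun p hp hp' =>
    sub_pos.2 (lt_of_le_of_ne (hf p hp) (Ne.symm hp'))
  set g : E →L[ℝ] ℝ := h - s • f with hg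
  have gdef : ∀ p, g p = h p - s * f p := fun p => by simp [hg]
  obtain ⟨z, hz, hzmax⟩ := (t.filter (fun p => f p ≠ f v ∧ g p = g w)).exists_max_image f (by
    rw [Finset.mem_filter] at hw'
    refine ⟨w', ?_⟩
    rw [Finset.mem_filter]
    refine ⟨hw'.1, hw'.2, ?_⟩
    have := hpos w' hw'.1 hw'.2
    have h2 : s * (f w' - f v) = h w' - h w := by rw [hs]; field_simp
    rw [gdef, gdef, hwf]; linarith)
  rw [Finset.mem_filter] at hz
  obtain ⟨hzt, hzf, hzg⟩ := hz
  have hF := hpos z hzt hzf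
  set F := f z - f v with hFdef
  have hgt : ∀ p ∈ t, g p ≤ g w := by
    intro p hp
    by_cases hp' : f p = f v
    · have := hwmax' p hp hp'
      rw [gdef, gdef, hwf, hp']; linarith
    · have h1 := hsmax p (by simp [hp, hp'])
      have h2 := hpos p hp hp'
      rw [div_le_iff₀ h2] at h1
      rw [gdef, gdef, hwf]; linarith
  have hgz : ∀ p ∈ t, g p = g w → f p - f v ≤ F := by
    intro p hp hpg
    by_cases hp' : f p = f v
    · rw [hp']; linarith
    · have := hzmax p (by simp [hp, hp', hpg])
      linarith
  set d := g v - g w with hddef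
  have hdpos : 0 < d := by
    rw [hddef, gdef, gdef, hwf]; linarith
  have step : ∀ l : ℝ, 0 < l → (∀ p ∈ t, (g p - g w) * F + l * d * (f p - f v) ≤ l * d * F) →
      PyramidalExt (convexHull ℝ (t : Set E))
        (convexHull ℝ (insert (w + l • (v - w)) (t : Set E))) := by
    intro l hl hlt
    have hgu : g (w + l • (v - w)) = g w + l * d := by simp [hddef]
    have hfu : f (w + l • (v - w)) = f v := by simp [hwf]
    refine stack t {w, z} _ g (g w) (by simp) ?_ ?_ hgt ?_ ?_
    · intro x hx
      simp at hx
      rcases hx with rfl | rfl <;> assumption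
    · intro x hx
      simp at hx
      rcases hx with rfl | rfl
      · rfl
      · exact hzg
    · rw [hgu]; nlinarith [mul_pos hl hdpos]
    · intro m hm hmg
      have h1 := hull_le (-f) (-f v) (by
        rintro p (rfl | hp)
        · simp [hwf]
        · simpa using hf p (by exact_mod_cast hp)) m hm
      have h2 := hull_le (F • g + (l * d) • f) (F * g w + l * d * (f v + F)) (by
        rintro p (rfl | hp)
        · simp only [add_apply, smul_apply, smul_eq_mul,
            hgu, hfu]
          linarith
        · have := hlt p (by exact_mod_cast hp)
          simp only [add_apply, smul_apply, smul_eq_mul]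
          linarith) m hm
      simp only [add_apply, smul_apply, smul_eq_mul,
        hmg] at h2
      simp only [neg_apply, neg_le_neg_iff] at h1
      have h3 : f m ≤ f v + F := by
        have : 0 < l * d := mul_pos hl hdpos
        have h4 : l * d * f m ≤ l * d * (f v + F) := by linarith
        exact le_of_mul_le_mul_left h4 this
      set y := (f m - f v) / F with hy
      have hyF : y * F = f m - f v := by rw [hy]; field_simp
      have hy0 : 0 ≤ y := div_nonneg (by linarith) hF.le
      have hy1 : y ≤ 1 := by rw [hy, div_le_one hF]; linarith
      have hmeq : m = (1 - y) • w + y • z := by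
        have e1 : f m = f ((1 - y) • w + y • z) := by
          simp only [map_add, map_smul, smul_eq_mul, hwf]
          rw [hFdef] at hyF; linarith
        refine hinj _ _ e1 ?_
        have e2 : g m = g ((1 - y) • w + y • z) := by
          simp only [map_add, map_smul, smul_eq_mul, hzg, hmg]; ring
        rw [gdef, gdef, e1] at e2
        linarith
      rw [Finset.coe_pair, convexHull_pair, hmeq]
      exact ⟨1 - y, y, by linarith, hy0, by ring, rfl⟩
  by_cases hall : ∀ p ∈ t, (g p - g w) * F + 1 * d * (f p - f v) ≤ 1 * d * F
  · have := step 1 one_pos hall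
    rw [one_smul, add_sub_cancel] at this
    exact .single this
  push Not at hall
  obtain ⟨p0, hp0, hp0'⟩ := hall
  have hlarge : ∀ p ∈ t, F < f p - f v → 0 < g w - g p := by
    intro p hp hpF
    rcases (hgt p hp).eq_or_lt with h1 | h1
    · exact absurd (hgz p hp h1) (not_le.2 hpF)
    · linarith
  have hp0F : F < f p0 - f v := by
    by_contra hcon
    push Not at hcon
    have h1 := hgt p0 hp0
    nlinarith [mul_nonneg hF.le (sub_nonneg.2 h1), mul_nonneg hdpos.le (sub_nonneg.2 hcon)]
  obtain ⟨q, hq, hqmin⟩ := (t.filter (fun p => F < f p - f v)).exists_min_image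
    (fun p => ((g w - g p) * F) / (d * (f p - f v - F))) ⟨p0, by simp [hp0, hp0F]⟩
  rw [Finset.mem_filter] at hq
  obtain ⟨hqt, hqF⟩ := hq
  set l := ((g w - g q) * F) / (d * (f q - f v - F)) with hl
  have hlden : 0 < d * (f q - f v - F) := mul_pos hdpos (by linarith)
  have hlpos : 0 < l := div_pos (mul_pos (hlarge q hqt hqF) hF) hlden
  have hleq : l * (d * (f q - f v - F)) = (g w - g q) * F := by
    rw [hl]; exact div_mul_cancel₀ _ hlden.ne'
  have hl1 : l < 1 := by
    refine lt_of_le_of_lt (hqmin p0 (by simp [hp0, hp0F])) ?_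
    rw [div_lt_one (mul_pos hdpos (by linarith))]
    linarith
  have hstep := step l hlpos (by
    intro p hp
    by_cases hpF : F < f p - f v
    · have h1 := hqmin p (by simp [hp, hpF])
      rw [le_div_iff₀ (mul_pos hdpos (by linarith))] at h1
      linarith
    · push Not at hpF
      have h1 := hgt p hp
      nlinarith [mul_nonneg hF.le (sub_nonneg.2 h1),
        mul_nonneg (mul_pos hlpos hdpos).le (sub_nonneg.2 hpF)])
  set u := w + l • (v - w) with hu
  have hfu : f u = f v := by simp [hu, hwf]
  have hhu : h u < h v := by
    simp only [hu, map_add, map_smul, map_sub, smul_eq_mul]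
    nlinarith
  set t' := insert u (t.erase z) with ht'
  have hqz : q ≠ z := by
    rintro rfl
    exact lt_irrefl _ hqF
  -- z is a convex combination of u and q
  have hzmem : z ∈ convexHull ℝ (t' : Set E) := by
    have huq : segment ℝ u q ⊆ convexHull ℝ (t' : Set E) :=
      segment_subset_convexHull (by simp [ht']) (by simp [ht', hqt, hqz])
    apply huq
    have hYpos : 0 < f q - f v := by linarith
    set y := F / (f q - f v) with hy
    have hyF : y * (f q - f v) = F := by rw [hy]; field_simp
    have hy0 : 0 ≤ y := div_nonneg hF.le hYpos.le
    have hy1 : y ≤ 1 := by rw [hy, div_le_one hYpos]; linarith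
    refine ⟨1 - y, y, by linarith, hy0, by ring, ?_⟩
    have e1 : f ((1 - y) • u + y • q) = f z := by
      simp only [map_add, map_smul, smul_eq_mul, hfu]
      rw [hFdef] at hyF; linarith
    refine hinj _ _ e1 ?_
    have e2 : g ((1 - y) • u + y • q) = g z := by
      have hgu : g u = g w + l * d := by simp [hu, hddef]
      simp only [map_add, map_smul, smul_eq_mul, hgu, hzg]
      have : (f q - f v) * ((1 - y) * (l * d) - y * (g w - g q)) = 0 := by
        linear_combination hleq - (l * d + (g w - g q)) * hyF
      have h3 := (mul_eq_zero.1 this).resolve_left hYpos.ne'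
      linarith
    rw [gdef, gdef, e1] at e2
    linarith
  have hsub : (t : Set E) ⊆ convexHull ℝ (t' : Set E) := by
    intro x hx
    by_cases hxz : x = z
    · rw [hxz]; exact hzmem
    · exact subset_convexHull ℝ _ (by simp [ht', hxz]; right; exact_mod_cast hx)
  have heq1 : convexHull ℝ (insert u (t : Set E)) = convexHull ℝ (t' : Set E) := by
    apply Set.Subset.antisymm
    · refine convexHull_min ?_ (convex_convexHull ℝ _)
      rintro x (rfl | hx)
      · exact subset_convexHull ℝ _ (by simp [ht'])
      · exact hsub hx
    · refine convexHull_mono ?_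
      intro x hx
      simp [ht'] at hx
      rcases hx with rfl | hx
      · simp
      · simp [hx.1]
  have hut : u ∈ convexHull ℝ (insert v (t : Set E)) := by
    refine segment_subset_convexHull (x := w) (y := v) (by simp [hwt]) (by simp) ?_
    refine ⟨1 - l, l, by linarith, hlpos.le, by ring, ?_⟩
    rw [hu]; module
  have heq2 : convexHull ℝ (insert v (t' : Set E)) = convexHull ℝ (insert v (t : Set E)) := by
    apply Set.Subset.antisymm
    · refine convexHull_min ?_ (convex_convexHull ℝ _)
      rintro x (rfl | hx)
      · exact subset_convexHull ℝ _ (by simp)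
      · simp [ht'] at hx
        rcases hx with rfl | hx
        · exact hut
        · exact subset_convexHull ℝ _ (by simp [hx.1])
    · refine convexHull_min ?_ (convex_convexHull ℝ _)
      rintro x (rfl | hx)
      · exact subset_convexHull ℝ _ (by simp)
      · exact convexHull_mono (Set.subset_insert _ _) (hsub hx)
  rw [heq1] at hstep
  rw [← heq2]
  refine Relation.ReflTransGen.head hstep (ih _ ?_ t' rfl ?_ ?_ ⟨u, by simp [ht'], hfu⟩)
  · rw [← hcard]
    apply Finset.card_lt_card
    refine (Finset.ssubset_iff_of_subset ?_).2 ⟨z, by simp [hzt, hzf], ?_⟩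
    · intro x hx
      simp only [ht', Finset.mem_filter, Finset.mem_insert, Finset.mem_erase] at hx ⊢
      rcases hx with ⟨rfl | hx, hx'⟩
      · exact absurd hfu hx'
      · exact ⟨hx.2, hx'⟩
    · intro hx
      simp only [ht', Finset.mem_filter, Finset.mem_insert, Finset.mem_erase] at hx
      rcases hx with ⟨hx | hx, hx'⟩
      · rw [hx] at hx'; exact hx' hfu
      · exact hx.1 rfl
  · intro p hp
    simp only [ht', Finset.mem_insert, Finset.mem_erase] at hp
    rcases hp with rfl | hp
    · exact hfu.ge
    · exact hf p hp.2
  · intro p hp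
    simp only [ht', Finset.mem_insert, Finset.mem_erase] at hp
    rcases hp with rfl | hp
    · exact hhu
    · exact hh p hp.2

theorem addPoint (t : Finset (EuclideanSpace ℝ (Fin 2))) (ht : t.Nonempty)
    (v : EuclideanSpace ℝ (Fin 2)) :
    Relation.ReflTransGen PyramidalExt
      (convexHull ℝ (t : Set (EuclideanSpace ℝ (Fin 2))))
      (convexHull ℝ (insert v (t : Set (EuclideanSpace ℝ (Fin 2))))) := by
  classical
  by_cases hv : v ∈ convexHull ℝ (t : Set (EuclideanSpace ℝ (Fin 2)))
  · have : convexHull ℝ (insert v (t : Set (EuclideanSpace ℝ (Fin 2)))) = convexHull ℝ (t : Set (EuclideanSpace ℝ (Fin 2))) := by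
      apply Set.Subset.antisymm
      · refine convexHull_min ?_ (convex_convexHull ℝ _)
        rintro x (rfl | hx)
        · exact hv
        · exact subset_convexHull ℝ _ hx
      · exact convexHull_mono (Set.subset_insert _ _)
    rw [this]
  obtain ⟨h, c, h1, h2⟩ := geometric_hahn_banach_closed_point (convex_convexHull ℝ _)
    (t.finite_toSet.isClosed_convexHull ℝ) hv
  have hh : ∀ p ∈ t, h p < h v := fun p hp =>
    (h1 p (subset_convexHull ℝ _ (by exact_mod_cast hp))).trans h2
  set a := h (EuclideanSpace.single 0 1) with ha
  set b := h (EuclideanSpace.single 1 1) with hb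
  have hx : ∀ x, h x = a * x 0 + b * x 1 := by
    intro x
    have : x = x 0 • EuclideanSpace.single 0 1 + x 1 • EuclideanSpace.single 1 (1:ℝ) := by
      ext i; fin_cases i <;> simp
    conv_lhs => rw [this]
    simp only [map_add, map_smul, smul_eq_mul, ← ha, ← hb]; ring
  set k : EuclideanSpace ℝ (Fin 2) →L[ℝ] ℝ :=
    a • EuclideanSpace.proj 1 - b • EuclideanSpace.proj 0 with hk
  have hkx : ∀ x, k x = a * x 1 - b * x 0 := fun x => by simp [hk]
  have hab : 0 < a ^ 2 + b ^ 2 := by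
    obtain ⟨p, hp⟩ := ht
    have := hh p hp
    by_contra hcon
    have ha0 : a = 0 := by nlinarith [sq_nonneg a, sq_nonneg b]
    have hb0 : b = 0 := by nlinarith [sq_nonneg a, sq_nonneg b]
    rw [hx, hx, ha0, hb0] at this
    simp at this
  obtain ⟨w, hw, hwmin⟩ := t.exists_min_image (fun p => (k p - k v) / (h v - h p)) ht
  set s := (k w - k v) / (h v - h w) with hs
  set f := k + s • h with hf
  have hfx : ∀ x, f x = k x + s * h x := fun x => by simp [hf]
  refine core f h ?_ v _ t rfl ?_ hh ⟨w, hw, ?_⟩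
  · intro x y h3 h4
    rw [hfx, hfx, h4] at h3
    have h5 : k x = k y := by linarith
    rw [hkx, hkx] at h5
    rw [hx, hx] at h4
    have e0 : (a ^ 2 + b ^ 2) * (x 0 - y 0) = 0 := by linear_combination a * h4 - b * h5
    have e1 : (a ^ 2 + b ^ 2) * (x 1 - y 1) = 0 := by linear_combination b * h4 + a * h5
    have e0' := (mul_eq_zero.1 e0).resolve_left hab.ne'
    have e1' := (mul_eq_zero.1 e1).resolve_left hab.ne'
    ext i
    fin_cases i
    · simp; linarith
    · simp; linarith
  · intro p hp
    have h3 := hwmin p hp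
    rw [le_div_iff₀ (sub_pos.2 (hh p hp))] at h3
    rw [hfx, hfx]; linarith
  · have h3 : s * (h v - h w) = k w - k v := div_mul_cancel₀ _ (sub_pos.2 (hh w hw)).ne'
    rw [hfx, hfx]; linarith

theorem stmt12 (P Q : Set (EuclideanSpace ℝ (Fin 2)))
    (hP : IsPolytope P) (hQ : IsPolytope Q) (hne : P.Nonempty) (hPQ : P ⊆ Q) :
    Relation.ReflTransGen PyramidalExt P Q := by
  classical
  obtain ⟨t, rfl⟩ := hP
  obtain ⟨s, rfl⟩ := hQ
  have htne : t.Nonempty := by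
    rw [convexHull_nonempty_iff] at hne
    exact_mod_cast hne
  have key : ∀ r : Finset (EuclideanSpace ℝ (Fin 2)), Relation.ReflTransGen PyramidalExt
      (convexHull ℝ (t : Set (EuclideanSpace ℝ (Fin 2))))
      (convexHull ℝ ((r ∪ t : Finset (EuclideanSpace ℝ (Fin 2))) :
        Set (EuclideanSpace ℝ (Fin 2)))) := by
    intro r
    induction r using Finset.induction_on with
    | empty => rw [Finset.empty_union]
    | insert v r _ ih =>
      refine ih.trans ?_
      have := addPoint (r ∪ t) (htne.mono Finset.subset_union_right) v
      rwa [← Finset.coe_insert, ← Finset.insert_union] at this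
  have heq : convexHull ℝ ((s ∪ t : Finset (EuclideanSpace ℝ (Fin 2))) :
      Set (EuclideanSpace ℝ (Fin 2))) = convexHull ℝ (s : Set (EuclideanSpace ℝ (Fin 2))) := by
    apply Set.Subset.antisymm
    · refine convexHull_min ?_ (convex_convexHull ℝ _)
      rw [Finset.coe_union]
      exact Set.union_subset (subset_convexHull ℝ _) ((subset_convexHull ℝ _).trans hPQ)
    · exact convexHull_mono (by simp)
  rw [← heq]
  exact key s
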